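/- Suppose there is a constant C₀ > 0 such that a(w,w) ≥ C₀·‖w‖²_{L²(Ω̄)} for every w ∈ L²(Ω̄) with ∫_{Ω̄} w(x) dx = 0 (a nonlocal Poincaré inequality). Let 0 < t ≤ 1, set ϱ = |Ω_I|/|Ω̄|, and let Π ⊂ L²(Ω_I) satisfy inf_{p∈Π} ‖1 − p‖_{L²(Ω_I)} ≤ ε·|Ω_I|^{1/2} with 0 ≤ ε ≤ (1−t)√ϱ/(1 + √(1−ϱ)). Then every u ∈ L²(Ω̄) with ∫_{Ω_I} u(x)·p(x) dx = 0 for all p ∈ Π satisfies a(u,u) ≥ (tϱ/(1 + √(1−ϱ)))·C₀·‖u‖²_{L²(Ω̄)}. -/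

import Mathlib

open MeasureTheory

/-- The `L²` norm of `u` over the set `D`. -/
noncomputable def l2norm {n : ℕ} (D : Set (EuclideanSpace ℝ (Fin n)))
    (u : EuclideanSpace ℝ (Fin n) → ℝ) : ℝ :=
  Real.sqrt (∫ x in D, u x ^ 2)

/-- The nonlocal bilinear form
`a(u,v) = ∫_D ∫_D γ(x,y) (u x - u y) (v x - v y) dy dx`. -/
noncomputable def aform {n : ℕ} (D : Set (EuclideanSpace ℝ (Fin n)))
    (γ : EuclideanSpace ℝ (Fin n) → EuclideanSpace ℝ (Fin n) → ℝ)
    (u v : EuclideanSpace ℝ (Fin n) → ℝ) : ℝ :=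
  ∫ x in D, ∫ y in D, γ x y * (u x - u y) * (v x - v y)

theorem cs_aux {α : Type*} [MeasurableSpace α] {μ : Measure α} {f g : α → ℝ}
    (hf : MemLp f 2 μ) (hg : MemLp g 2 μ) :
    |∫ x, f x * g x ∂μ| ≤ Real.sqrt (∫ x, f x ^ 2 ∂μ) * Real.sqrt (∫ x, g x ^ 2 ∂μ) := by
  have h := integral_mul_norm_le_Lp_mul_Lq (μ := μ) (f := f) (g := g) (p := 2) (q := 2)
    (by constructor <;> norm_num) (by simpa using hf) (by simpa using hg)
  have h1 : |∫ x, f x * g x ∂μ| ≤ ∫ x, ‖f x‖ * ‖g x‖ ∂μ := by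
    have := norm_integral_le_integral_norm (μ := μ) (fun x => f x * g x)
    simpa only [norm_mul, Real.norm_eq_abs] using this
  refine h1.trans (h.trans (le_of_eq ?_))
  simp only [Real.sqrt_eq_rpow, Real.norm_eq_abs, Real.rpow_two, sq_abs]

set_option maxHeartbeats 1000000 in
theorem stmt5 {n : ℕ} (Ω ΩI : Set (EuclideanSpace ℝ (Fin n)))
    (hΩmeas : MeasurableSet Ω) (hΩImeas : MeasurableSet ΩI)
    (hdisj : Disjoint Ω ΩI)
    (hΩbdd : Bornology.IsBounded Ω) (hΩIbdd : Bornology.IsBounded ΩI)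
    (hΩpos : 0 < volume Ω) (hΩIpos : 0 < volume ΩI)
    (γ : EuclideanSpace ℝ (Fin n) → EuclideanSpace ℝ (Fin n) → ℝ)
    (hγmeas : Measurable fun p : EuclideanSpace ℝ (Fin n) × EuclideanSpace ℝ (Fin n) => γ p.1 p.2)
    (hγnonneg : ∀ x y, 0 ≤ γ x y)
    (hγbdd : ∃ M, ∀ x y, γ x y ≤ M)
    -- the nonlocal Poincaré inequality
    (C₀ : ℝ) (hC₀ : 0 < C₀)
    (hpoincare : ∀ w : EuclideanSpace ℝ (Fin n) → ℝ,
      MemLp w 2 (volume.restrict (Ω ∪ ΩI)) → (∫ x in Ω ∪ ΩI, w x) = 0 →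
      aform (Ω ∪ ΩI) γ w w ≥ C₀ * ∫ x in Ω ∪ ΩI, w x ^ 2)
    (t : ℝ) (ht0 : 0 < t) (ht1 : t ≤ 1)
    (ϱ : ℝ) (hϱ : ϱ = (volume ΩI).toReal / (volume (Ω ∪ ΩI)).toReal)
    (P : Set (EuclideanSpace ℝ (Fin n) → ℝ))
    (hP : ∀ p ∈ P, MemLp p 2 (volume.restrict ΩI))
    (ε : ℝ) (hε0 : 0 ≤ ε)
    (hε : ε ≤ (1 - t) * Real.sqrt ϱ / (1 + Real.sqrt (1 - ϱ)))
    (hdist : ⨅ p ∈ P, ENNReal.ofReal (l2norm ΩI (fun x => 1 - p x)) ≤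
      ENNReal.ofReal (ε * Real.sqrt (volume ΩI).toReal))
    (u : EuclideanSpace ℝ (Fin n) → ℝ)
    (hu : MemLp u 2 (volume.restrict (Ω ∪ ΩI)))
    (horth : ∀ p ∈ P, ∫ x in ΩI, u x * p x = 0) :
    aform (Ω ∪ ΩI) γ u u ≥
      t * ϱ / (1 + Real.sqrt (1 - ϱ)) * C₀ * ∫ x in Ω ∪ ΩI, u x ^ 2 := by
  have hD : MeasurableSet (Ω ∪ ΩI) := hΩmeas.union hΩImeas
  have hfΩ : volume Ω ≠ ⊤ := hΩbdd.measure_lt_top.ne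
  have hfI : volume ΩI ≠ ⊤ := hΩIbdd.measure_lt_top.ne
  have hfD : volume (Ω ∪ ΩI) ≠ ⊤ := (hΩbdd.union hΩIbdd).measure_lt_top.ne
  have : IsFiniteMeasure (volume.restrict Ω) := ⟨by simpa using hfΩ.lt_top⟩
  have : IsFiniteMeasure (volume.restrict ΩI) := ⟨by simpa using hfI.lt_top⟩
  have : IsFiniteMeasure (volume.restrict (Ω ∪ ΩI)) :=
    ⟨by rw [Measure.restrict_apply_univ]; exact hfD.lt_top⟩
  have huΩ : MemLp u 2 (volume.restrict Ω) :=
    hu.mono_measure (Measure.restrict_mono Set.subset_union_left le_rfl)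
  have huI : MemLp u 2 (volume.restrict ΩI) :=
    hu.mono_measure (Measure.restrict_mono Set.subset_union_right le_rfl)
  have hiD : Integrable u (volume.restrict (Ω ∪ ΩI)) := hu.integrable (by norm_num)
  have hiΩ : Integrable u (volume.restrict Ω) := huΩ.integrable (by norm_num)
  have hiI : Integrable u (volume.restrict ΩI) := huI.integrable (by norm_num)
  set a := (volume Ω).toReal with ha
  set b := (volume ΩI).toReal with hb
  have ha0 : 0 < a := ENNReal.toReal_pos hΩpos.ne' hfΩ
  have hb0 : 0 < b := ENNReal.toReal_pos hΩIpos.ne' hfI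
  have hV : (volume (Ω ∪ ΩI)).toReal = a + b := by
    rw [measure_union hdisj hΩImeas, ENNReal.toReal_add hfΩ hfI]
  rw [hV] at hϱ
  have hV0 : 0 < a + b := by linarith
  set N2 := ∫ x in Ω ∪ ΩI, u x ^ 2 with hN2
  have hsum2 : N2 = (∫ x in Ω, u x ^ 2) + ∫ x in ΩI, u x ^ 2 :=
    setIntegral_union hdisj hΩImeas huΩ.integrable_sq huI.integrable_sq
  have hsum1 : (∫ x in Ω ∪ ΩI, u x) = (∫ x in Ω, u x) + ∫ x in ΩI, u x :=
    setIntegral_union hdisj hΩImeas hiΩ hiI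
  have hA0 : 0 ≤ ∫ x in Ω, u x ^ 2 := integral_nonneg fun x => sq_nonneg _
  have hB0 : 0 ≤ ∫ x in ΩI, u x ^ 2 := integral_nonneg fun x => sq_nonneg _
  have hN0 : 0 ≤ N2 := by linarith
  set N := Real.sqrt N2 with hN
  have hNn : 0 ≤ N := Real.sqrt_nonneg _
  have hNsq : N ^ 2 = N2 := Real.sq_sqrt hN0
  have hone : ∀ ν : Measure (EuclideanSpace ℝ (Fin n)), IsFiniteMeasure ν →
      MemLp (fun _ => (1:ℝ)) 2 ν := fun ν _ => memLp_const 1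
  -- bound on Ω
  have hbΩ : |∫ x in Ω, u x| ≤ N * Real.sqrt a := by
    have h := cs_aux huΩ (hone _ inferInstance)
    simp only [mul_one, one_pow, integral_const, smul_eq_mul, Measure.real,
      Measure.restrict_apply_univ] at h
    refine h.trans ?_
    gcongr
    exact Real.sqrt_le_sqrt (by linarith)
  have hbI : |∫ x in ΩI, u x| ≤ N * (ε * Real.sqrt b) := by
    have key : ∀ δ : ℝ, 0 < δ → |∫ x in ΩI, u x| ≤ N * (ε * Real.sqrt b + δ) := by
      intro δ hδ
      have hlt : ⨅ p ∈ P, ENNReal.ofReal (l2norm ΩI (fun x => 1 - p x)) <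
          ENNReal.ofReal (ε * Real.sqrt b + δ) := by
        refine hdist.trans_lt ?_
        have : 0 ≤ ε * Real.sqrt b := by positivity
        rw [ENNReal.ofReal_lt_ofReal_iff (by linarith)]
        linarith
      simp only [iInf_lt_iff] at hlt
      obtain ⟨p, hp, hlt⟩ := hlt
      have hlt' : l2norm ΩI (fun x => 1 - p x) < ε * Real.sqrt b + δ := by
        have : 0 ≤ ε * Real.sqrt b := by positivity
        exact (ENNReal.ofReal_lt_ofReal_iff (by linarith)).1 hlt
      have hq : MemLp (fun x => 1 - p x) 2 (volume.restrict ΩI) :=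
        (hone _ inferInstance).sub (hP p hp)
      have h := cs_aux huI hq
      have hup : Integrable (fun x => u x * p x) (volume.restrict ΩI) :=
        huI.integrable_mul (hP p hp)
      have he : (∫ x in ΩI, u x * (1 - p x)) = ∫ x in ΩI, u x := by
        simp only [mul_sub, mul_one]
        rw [integral_sub hiI hup, horth p hp, sub_zero]
      rw [he] at h
      refine h.trans ?_
      have h1 : Real.sqrt (∫ x in ΩI, u x ^ 2) ≤ N := Real.sqrt_le_sqrt (by linarith)
      exact mul_le_mul h1 hlt'.le (Real.sqrt_nonneg _) hNn
    have hlim : Filter.Tendsto (fun δ : ℝ => N * (ε * Real.sqrt b + δ)) (nhdsWithin 0 (Set.Ioi 0))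
        (nhds (N * (ε * Real.sqrt b + 0))) :=
      (Continuous.tendsto (by fun_prop) 0).mono_left nhdsWithin_le_nhds
    rw [add_zero] at hlim
    exact ge_of_tendsto hlim (by filter_upwards [self_mem_nhdsWithin] with δ hδ using key δ hδ)
  -- the mean
  set m := ∫ x in Ω ∪ ΩI, u x with hm
  set c := m / (a + b) with hc
  have hcV : c * (a + b) = m := by rw [hc]; field_simp
  have hw : MemLp (fun x => u x - c) 2 (volume.restrict (Ω ∪ ΩI)) := hu.sub (memLp_const c)
  have hw0 : (∫ x in Ω ∪ ΩI, (u x - c)) = 0 := by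
    rw [integral_sub hiD (integrable_const c), integral_const]
    simp only [Measure.real, Measure.restrict_apply_univ, hV, smul_eq_mul]
    linarith
  have hw2 : (∫ x in Ω ∪ ΩI, (u x - c) ^ 2) = N2 - c ^ 2 * (a + b) := by
    have : ∀ x, (u x - c) ^ 2 = u x ^ 2 - (2 * c * u x - c ^ 2) := fun x => by ring
    simp only [this]
    have hi2 : Integrable (fun x => 2 * c * u x - c ^ 2) (volume.restrict (Ω ∪ ΩI)) :=
      (hiD.const_mul _).sub (integrable_const _)
    rw [integral_sub hu.integrable_sq hi2,
      integral_sub (hiD.const_mul _) (integrable_const _), integral_const, integral_const_mul]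
    simp only [Measure.real, Measure.restrict_apply_univ, hV, smul_eq_mul]
    rw [← hm, ← hcV]
    ring
  have haf : aform (Ω ∪ ΩI) γ (fun x => u x - c) (fun x => u x - c) = aform (Ω ∪ ΩI) γ u u := by
    simp only [aform, sub_sub_sub_cancel_right]
  have hmain := hpoincare _ hw hw0
  rw [haf, hw2] at hmain
  -- arithmetic
  have hr0 : 0 < ϱ := by rw [hϱ]; positivity
  have h1r : 1 - ϱ = a / (a + b) := by rw [hϱ]; field_simp; ring
  have hr1 : 0 ≤ 1 - ϱ := by rw [h1r]; positivity
  set s := Real.sqrt (1 - ϱ) with hs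
  have hs0 : 0 ≤ s := Real.sqrt_nonneg _
  have hs2 : s ^ 2 = 1 - ϱ := Real.sq_sqrt hr1
  have hs1 : s ≤ 1 := Real.sqrt_le_one.2 (by linarith)
  set W := Real.sqrt (a + b) with hW
  have hW2 : W ^ 2 = a + b := Real.sq_sqrt hV0.le
  have hWp : 0 < W := Real.sqrt_pos.2 hV0
  have hsa : Real.sqrt a = s * W := by
    rw [hs, hW, ← Real.sqrt_mul hr1, h1r]; congr 1; field_simp
  have hsb : Real.sqrt b = Real.sqrt ϱ * W := by
    rw [hW, ← Real.sqrt_mul hr0.le, hϱ]; congr 1; field_simp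
  have hrs : ϱ / (1 + s) = 1 - s := by
    rw [div_eq_iff (by positivity)]; linear_combination hs2
  have hεr : ε * Real.sqrt ϱ ≤ (1 - t) * (1 - s) := by
    calc ε * Real.sqrt ϱ ≤ (1 - t) * Real.sqrt ϱ / (1 + s) * Real.sqrt ϱ := by gcongr
      _ = (1 - t) * ((Real.sqrt ϱ) ^ 2 / (1 + s)) := by ring
      _ = _ := by rw [Real.sq_sqrt hr0.le, hrs]
  have hmb : |m| ≤ N * (1 - t * (1 - s)) * W := by
    calc |m| ≤ |∫ x in Ω, u x| + |∫ x in ΩI, u x| := by rw [hsum1]; exact abs_add_le _ _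
      _ ≤ N * (s * W) + N * (ε * (Real.sqrt ϱ * W)) := by rw [hsa] at hbΩ; rw [hsb] at hbI; linarith
      _ = N * (s + ε * Real.sqrt ϱ) * W := by ring
      _ ≤ N * (s + (1 - t) * (1 - s)) * W := by gcongr
      _ = _ := by ring
  have hcW : |c| * W ≤ N * (1 - t * (1 - s)) := by
    rw [← hcV, abs_mul, abs_of_pos hV0, ← hW2] at hmb
    have : (|c| * W) * W ≤ N * (1 - t * (1 - s)) * W := by linarith
    exact le_of_mul_le_mul_right this hWp
  set k := t * (1 - s) with hk
  have hk0 : 0 ≤ k := mul_nonneg ht0.le (by linarith)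
  have hk1 : k ≤ 1 := mul_le_one₀ ht1 (by linarith) (by linarith)
  have hc2 : c ^ 2 * (a + b) ≤ (1 - k) * N2 := by
    have h1 : (|c| * W) ^ 2 ≤ (N * (1 - k)) ^ 2 := by gcongr
    rw [mul_pow, sq_abs, hW2, mul_pow, hNsq] at h1
    have h2 := mul_nonneg hN0 (mul_nonneg hk0 (sub_nonneg.2 hk1))
    linarith
  have hk' : t * ϱ / (1 + s) = k := by rw [mul_div_assoc, hrs]
  rw [hk']
  have h3 := mul_le_mul_of_nonneg_left hc2 hC₀.le
  linarith
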